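/- arXiv:1710.00451 — 5 statements merged into one kernel-verified Lean document; each statement's English description precedes it below -/
import Mathlib

section
/- Let N ≥ 1, let F : ℝ^N → ℝ be continuous, and let p > 0. Then the averaged function G_p is continuously differentiable on ℝ^N. If moreover F is nondecreasing in each variable, then ∂_{κ_k} G_p(κ) ≥ 0 for every k ∈ {1,…,N} and every κ ∈ ℝ^N. -/
open MeasureTheory

/-!
Write `a = 1 / p`, and for each direction `k` let `faceIntegral a F k x` be the integral of `F` over
the face `ζ_k = 0` of the cube `x + [0,a]^N`. By Fubini (`cube_integral_eq`), the integral of `F`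
over the cube is `∫ s in 0..a, faceIntegral a F k (x + s e_k)`, so the fundamental theorem of
calculus gives its `k`-th partial derivative as the difference of the integrals of `F` over the two
opposite faces orthogonal to `e_k` (`hasDerivAt_cube_integral`). These differences are continuous
in `x`, and nonnegative if `F` is nondecreasing. That continuous partial derivatives
imply differentiability (`hasFDerivAt_of_partials`) follows by changing the coordinates one at a
time, with the mean value inequality applied to each change.
-/

/-- One-coordinate mean value estimate: if the `k`-th partial derivative is within `ε` of the
constant `c` along the segment, the first order error is at most `ε * |r|`. -/
lemma abs_sub_le_of_partial {N : ℕ} {f : (Fin N → ℝ) → ℝ} {D : (Fin N → ℝ) → ℝ} {k : Fin N}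
    (hD : ∀ (x : Fin N → ℝ) (t : ℝ),
      HasDerivAt (fun t : ℝ => f (x + Pi.single k t)) (D (x + Pi.single k t)) t)
    (y : Fin N → ℝ) (r c ε : ℝ)
    (hε : ∀ t : ℝ, |t| ≤ |r| → |D (y + Pi.single k t) - c| ≤ ε) :
    |f (y + Pi.single k r) - f y - c * r| ≤ ε * |r| := by
  have key := Convex.norm_image_sub_le_of_norm_hasDerivWithin_le
    (f := fun t : ℝ => f (y + Pi.single k t) - c * t)
    (f' := fun t => D (y + Pi.single k t) - c) (s := Set.uIcc 0 r) (x := 0) (y := r) (C := ε)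
    (fun t _ => by
      have h := (hD y t).sub ((hasDerivAt_id t).const_mul c)
      rw [mul_one] at h
      exact h.hasDerivWithinAt)
    (fun t ht => hε t (by simpa using Set.abs_sub_left_of_mem_uIcc ht))
    (convex_uIcc 0 r) Set.left_mem_uIcc Set.right_mem_uIcc
  have e : f (y + Pi.single k r) - c * r - (f (y + Pi.single k 0) - c * 0)
      = f (y + Pi.single k r) - f y - c * r := by
    rw [Pi.single_zero, add_zero]; ring
  simpa only [Real.norm_eq_abs, e, sub_zero] using key

/-- A function on `ℝ^N` with continuous partial derivatives is differentiable. -/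
lemma hasFDerivAt_of_partials {N : ℕ} {f : (Fin N → ℝ) → ℝ} {D : Fin N → (Fin N → ℝ) → ℝ}
    (hDc : ∀ k, Continuous (D k))
    (hD : ∀ (k : Fin N) (x : Fin N → ℝ) (t : ℝ),
      HasDerivAt (fun t : ℝ => f (x + Pi.single k t)) (D k (x + Pi.single k t)) t)
    (x : Fin N → ℝ) :
    HasFDerivAt f (∑ k, D k x • ContinuousLinearMap.proj (R := ℝ) (φ := fun _ : Fin N => ℝ) k)
      x := by
  -- Only the coordinates in `s` are incremented; `s = univ` is the claim.
  have main : ∀ s : Finset (Fin N),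
      (fun h : Fin N → ℝ => f (x + fun i => if i ∈ s then h i else 0) - f x - ∑ k ∈ s, D k x * h k)
        =o[nhds 0] (fun h => h) := by
    intro s
    induction s using Finset.induction_on with
    | empty =>
      have e : (x + fun _ => (0 : ℝ)) = x := by ext; simp
      simp [e]
    | insert k s hk ih =>
      have step : (fun h : Fin N → ℝ =>
          f ((x + fun i => if i ∈ s then h i else 0) + Pi.single k (h k))
            - f (x + fun i => if i ∈ s then h i else 0) - D k x * h k)
          =o[nhds 0] (fun h => h) := by
        rw [Asymptotics.isLittleO_iff]
        intro ε hε
        obtain ⟨δ, hδ, hball⟩ := Metric.continuous_iff.1 (hDc k) x ε hε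
        filter_upwards [Metric.ball_mem_nhds (0 : Fin N → ℝ) hδ] with h hh
        rw [mem_ball_zero_iff] at hh
        refine (abs_sub_le_of_partial (hD k) _ (h k) (D k x) ε ?_).trans
          (mul_le_mul_of_nonneg_left (norm_le_pi_norm h k) hε.le)
        intro t ht
        refine (hball _ ?_).le
        rw [dist_eq_norm, add_assoc, add_sub_cancel_left]
        refine lt_of_le_of_lt ((pi_norm_le_iff_of_nonneg (norm_nonneg h)).2 fun i => ?_) hh
        by_cases hik : i = k
        · subst hik
          simpa [hk] using ht.trans (norm_le_pi_norm h i)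
        · by_cases his : i ∈ s
          · simpa [his, hik] using norm_le_pi_norm h i
          · simp [his, hik]
      refine (step.add ih).congr_left fun h => ?_
      have e : (x + fun i => if i ∈ insert k s then h i else 0)
          = (x + fun i => if i ∈ s then h i else 0) + Pi.single k (h k) := by
        ext i
        by_cases hik : i = k
        · subst hik; simp [hk]
        · simp [hik]
      rw [e, Finset.sum_insert hk]
      ring
  rw [hasFDerivAt_iff_isLittleO_nhds_zero]
  refine (main Finset.univ).congr_left fun h => ?_
  simp

/-- The integral of `F` over the face of the cube `x + [0,a]^(n+1)` on which the `k`-th coordinate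
equals `x k`. -/
noncomputable def faceIntegral {n : ℕ} (a : ℝ) (F : (Fin (n + 1) → ℝ) → ℝ) (k : Fin (n + 1))
    (x : Fin (n + 1) → ℝ) : ℝ :=
  ∫ y in Set.Icc (0 : Fin n → ℝ) (fun _ => a), F (x + k.insertNth (α := fun _ => ℝ) 0 y)

lemma continuous_faceIntegral {n : ℕ} (a : ℝ) {F : (Fin (n + 1) → ℝ) → ℝ} (hF : Continuous F)
    (k : Fin (n + 1)) : Continuous (faceIntegral a F k) := by
  refine continuous_parametric_integral_of_continuous
    (f := fun (x : Fin (n + 1) → ℝ) (y : Fin n → ℝ) =>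
      F (x + k.insertNth (α := fun _ => ℝ) 0 y)) ?_ isCompact_Icc
  refine hF.comp (continuous_fst.add ?_)
  exact Continuous.finInsertNth (A := fun _ => ℝ) k continuous_const continuous_snd

/-- Fubini: the integral over the cube is the integral over `s` of the integrals over its slices. -/
lemma cube_integral_eq {n : ℕ} {a : ℝ} (ha : 0 ≤ a) {F : (Fin (n + 1) → ℝ) → ℝ}
    (hF : Continuous F) (k : Fin (n + 1)) (x : Fin (n + 1) → ℝ) :
    ∫ ζ in Set.Icc (0 : Fin (n + 1) → ℝ) (fun _ => a), F (x + ζ)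
      = ∫ s in (0 : ℝ)..a, faceIntegral a F k (x + Pi.single k s) := by
  have hmp := (volume_preserving_piFinSuccAbove (fun _ : Fin (n + 1) => ℝ) k).symm
  have hins : Continuous fun z : ℝ × (Fin n → ℝ) => k.insertNth (α := fun _ => ℝ) z.1 z.2 :=
    Continuous.finInsertNth (A := fun _ => ℝ) k continuous_fst continuous_snd
  rw [← hmp.setIntegral_preimage_emb (MeasurableEquiv.measurableEmbedding _)]
  have hpre : (MeasurableEquiv.piFinSuccAbove (fun _ : Fin (n + 1) => ℝ) k).symm ⁻¹'
      Set.Icc (0 : Fin (n + 1) → ℝ) (fun _ => a)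
      = Set.Icc (0 : ℝ) a ×ˢ Set.Icc (0 : Fin n → ℝ) (fun _ => a) := by
    ext z
    simp only [Set.mem_preimage, MeasurableEquiv.piFinSuccAbove_symm_apply, Set.mem_prod]
    exact Fin.insertNth_mem_Icc (α := fun _ => ℝ)
  rw [hpre]
  simp only [MeasurableEquiv.piFinSuccAbove_symm_apply]
  rw [Measure.volume_eq_prod, setIntegral_prod, intervalIntegral.integral_of_le ha,
    ← integral_Icc_eq_integral_Ioc]
  · refine integral_congr_ae (Filter.Eventually.of_forall fun s => ?_)
    refine integral_congr_ae (Filter.Eventually.of_forall fun y => ?_)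
    show F _ = F _
    congr 1
    rw [add_assoc]
    congr 1
    ext i
    refine Fin.succAboveCases k ?_ (fun j => ?_) i <;> simp [Fin.insertNthEquiv]
  · exact (hF.comp (continuous_const.add hins)).continuousOn.integrableOn_compact
      (isCompact_Icc.prod isCompact_Icc)

lemma hasDerivAt_cube_integral {n : ℕ} {a : ℝ} (ha : 0 ≤ a) {F : (Fin (n + 1) → ℝ) → ℝ}
    (hF : Continuous F) (k : Fin (n + 1)) (x : Fin (n + 1) → ℝ) (t : ℝ) :
    HasDerivAt (fun t : ℝ =>
        ∫ ζ in Set.Icc (0 : Fin (n + 1) → ℝ) (fun _ => a), F (x + Pi.single k t + ζ))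
      (faceIntegral a F k (x + Pi.single k t + Pi.single k a)
        - faceIntegral a F k (x + Pi.single k t)) t := by
  set J : ℝ → ℝ := fun s => faceIntegral a F k (x + Pi.single k s) with hJ
  have hJc : Continuous J := (continuous_faceIntegral a hF k).comp
    (continuous_const.add (continuous_single (A := fun _ => ℝ) k))
  have hshift : ∀ r s : ℝ, faceIntegral a F k (x + Pi.single k r + Pi.single k s) = J (r + s) := by
    intro r s
    simp only [hJ, Pi.single_add, add_assoc]
  have e : (fun t : ℝ =>
        ∫ ζ in Set.Icc (0 : Fin (n + 1) → ℝ) (fun _ => a), F (x + Pi.single k t + ζ))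
      = fun t => (∫ s in (0 : ℝ)..(t + a), J s) - ∫ s in (0 : ℝ)..t, J s := by
    ext r
    rw [cube_integral_eq ha hF k]
    simp only [hshift]
    rw [intervalIntegral.integral_comp_add_left J r, add_zero,
      intervalIntegral.integral_interval_sub_left (hJc.intervalIntegrable _ _)
        (hJc.intervalIntegrable _ _)]
  rw [e, hshift]
  have h1 : ∀ b, HasDerivAt (fun u => ∫ s in (0 : ℝ)..u, J s) (J b) b := fun b =>
    intervalIntegral.integral_hasDerivAt_right (hJc.intervalIntegrable _ _)
      hJc.aestronglyMeasurable.stronglyMeasurableAtFilter hJc.continuousAt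
  exact ((h1 (t + a)).comp_add_const t a).sub (h1 t)

lemma faceIntegral_mono {n : ℕ} (a : ℝ) {F : (Fin (n + 1) → ℝ) → ℝ} (hF : Continuous F)
    (hmono : ∀ κ q : Fin (n + 1) → ℝ, (∀ i, 0 ≤ q i) → F κ ≤ F (κ + q))
    (k : Fin (n + 1)) (x q : Fin (n + 1) → ℝ) (hq : ∀ i, 0 ≤ q i) :
    faceIntegral a F k x ≤ faceIntegral a F k (x + q) := by
  have hint : ∀ z : Fin (n + 1) → ℝ, IntegrableOn
      (fun y : Fin n → ℝ => F (z + k.insertNth (α := fun _ => ℝ) 0 y))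
      (Set.Icc (0 : Fin n → ℝ) (fun _ => a)) := fun z =>
    (hF.comp (continuous_const.add (Continuous.finInsertNth (A := fun _ => ℝ) k
      continuous_const continuous_id))).continuousOn.integrableOn_compact isCompact_Icc
  refine setIntegral_mono (hint x) (hint (x + q)) fun y => ?_
  show F _ ≤ F _
  rw [add_right_comm]
  exact hmono _ q hq

/-- For `F : ℝ^N → ℝ` continuous and `p > 0`, the averaged function
`G_p(κ) = p^N ∫_{[0,1/p]^N} F(κ + ζ) dζ` is continuously differentiable, and if moreover `F` is
nondecreasing in each variable then all partial derivatives of `G_p` are nonnegative. -/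
theorem stmt_1 (N : ℕ) (hN : 1 ≤ N) (F : (Fin N → ℝ) → ℝ)
    (hFc : Continuous F) (p : ℝ) (hp : 0 < p) :
    ContDiff ℝ 1 (fun κ : Fin N → ℝ =>
      p ^ N * ∫ ζ in Set.Icc (0 : Fin N → ℝ) (fun _ => 1 / p), F (κ + ζ)) ∧
    ((∀ κ q : Fin N → ℝ, (∀ i, 0 ≤ q i) → F κ ≤ F (κ + q)) →
      ∀ (k : Fin N) (κ : Fin N → ℝ),
        0 ≤ fderiv ℝ (fun κ' : Fin N → ℝ =>
              p ^ N * ∫ ζ in Set.Icc (0 : Fin N → ℝ) (fun _ => 1 / p), F (κ' + ζ)) κ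
            (Pi.single k 1)) := by
  obtain ⟨n, rfl⟩ : ∃ n, N = n + 1 := ⟨N - 1, by omega⟩
  have ha : 0 < 1 / p := by positivity
  generalize 1 / p = a at ha
  have hDc : ∀ k, Continuous fun x : Fin (n + 1) → ℝ =>
      faceIntegral a F k (x + Pi.single k a) - faceIntegral a F k x := fun k =>
    ((continuous_faceIntegral a hFc k).comp (continuous_id.add continuous_const)).sub
      (continuous_faceIntegral a hFc k)
  have hG := fun x => (hasFDerivAt_of_partials
    (f := fun κ => ∫ ζ in Set.Icc (0 : Fin (n + 1) → ℝ) (fun _ => a), F (κ + ζ)) hDc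
    (hasDerivAt_cube_integral ha.le hFc) x).const_mul (p ^ (n + 1))
  refine ⟨contDiff_one_iff_hasFDerivAt.2 ⟨_, ?_, hG⟩, fun hmono k κ => ?_⟩
  · have hsum : Continuous fun x : Fin (n + 1) → ℝ => ∑ k,
        (faceIntegral a F k (x + Pi.single k a) - faceIntegral a F k x) •
          ContinuousLinearMap.proj (R := ℝ) (φ := fun _ : Fin (n + 1) => ℝ) k :=
      continuous_finsetSum _ fun k _ => (hDc k).smul continuous_const
    exact hsum.const_smul (p ^ (n + 1))
  · rw [(hG κ).fderiv]
    have hnn : 0 ≤ faceIntegral a F k (κ + Pi.single k a) - faceIntegral a F k κ :=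
      sub_nonneg.2 (faceIntegral_mono a hFc hmono k κ _ fun i =>
        (Pi.single_nonneg.2 ha.le : (0 : Fin (n + 1) → ℝ) ≤ Pi.single k a) i)
    simp only [smul_apply, sum_apply,
      ContinuousLinearMap.proj_apply, smul_eq_mul]
    rw [Finset.sum_eq_single k (fun j _ hj => by simp [hj]) (by simp)]
    simpa using mul_nonneg (pow_pos hp (n + 1)).le hnn
end

section
/- Let N ≥ 1, let F : ℝ^N → ℝ be continuous and nondecreasing in each variable, and let κ ∈ (0,∞)^N satisfy κ_1 ≤ κ_2 ≤ … ≤ κ_N. Then F_p(κ) ≥ F(κ) for every p ≥ 1, and lim_{p→∞} F_p(κ) = F(κ). -/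
/-!
The average of a nondecreasing `F` over the cube `x + [0,1/p]^N` lies between the values of `F` at
the two extreme corners, `F x ≤ G_p x ≤ F (x + 1/p)` (`le_Gp`, `Gp_le`). For positive nondecreasing
`κ` the sum defining `τ_{k,p}` has at most `N` terms, the largest being `κ_k ^ p`, so
`κ_k ≤ τ_{k,p} ≤ N^{1/p} κ_k` (`le_tauP`, `tauP_le`) and `τ_{k,p} → κ_k`. The linear term is
nonnegative and `O(1/p)`. Hence `F κ ≤ F_p κ ≤ F (τ_p + 1/p) + O(1/p)`, and the right side tends to
`F κ` by continuity.
-/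

open MeasureTheory Filter

/-- The averaged function `G_p(κ) = p^N ∫_{[0,1/p]^N} F(κ + ζ) dζ`. -/
noncomputable def Gp (N : ℕ) (F : (Fin N → ℝ) → ℝ) (p : ℝ) (κ : Fin N → ℝ) : ℝ :=
  p ^ N * ∫ ζ in Set.Icc (0 : Fin N → ℝ) (fun _ => 1 / p), F (κ + ζ)

/-- `τ_{k,p}(κ) = (Σ_{l=0}^{k} κ_l^p)^{1/p}` (0-based indices). -/
noncomputable def tauP (N : ℕ) (p : ℝ) (κ : Fin N → ℝ) (k : Fin N) : ℝ :=
  (∑ l ∈ Finset.Iic k, κ l ^ p) ^ (1 / p)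

/-- `F_p(κ) = G_p(τ_{1,p}(κ),…,τ_{N,p}(κ)) + (1/p) Σ_k (N+1-k) κ_k`
(with 0-based indices, the coefficient `N+1-k` for `k ∈ {1,…,N}` becomes `N-k`). -/
noncomputable def FpReg (N : ℕ) (F : (Fin N → ℝ) → ℝ) (p : ℝ) (κ : Fin N → ℝ) : ℝ :=
  Gp N F p (tauP N p κ) + (1 / p) * ∑ k : Fin N, ((N : ℝ) - (k : ℕ)) * κ k

lemma volume_real_cube (N : ℕ) {p : ℝ} (hp : 0 < p) :
    p ^ N * volume.real (Set.Icc (0 : Fin N → ℝ) (fun _ => 1 / p)) = 1 := by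
  have h0 : (0 : Fin N → ℝ) ≤ fun _ => 1 / p := fun _ => by
    simp only [Pi.zero_apply]; positivity
  rw [Measure.real, Real.volume_Icc_pi_toReal h0]
  simp [hp.ne']

lemma integrableOn_shift {N : ℕ} {F : (Fin N → ℝ) → ℝ} (hFc : Continuous F) (p : ℝ)
    (x : Fin N → ℝ) :
    IntegrableOn (fun ζ => F (x + ζ)) (Set.Icc (0 : Fin N → ℝ) (fun _ => 1 / p)) :=
  (hFc.comp (continuous_const.add continuous_id)).continuousOn.integrableOn_compact isCompact_Icc

lemma le_Gp {N : ℕ} {F : (Fin N → ℝ) → ℝ} (hFc : Continuous F) (hF : Monotone F) {p : ℝ}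
    (hp : 0 < p) (x : Fin N → ℝ) : F x ≤ Gp N F p x := by
  have h : ∫ _ζ in Set.Icc (0 : Fin N → ℝ) (fun _ => 1 / p), F x ≤
      ∫ ζ in Set.Icc (0 : Fin N → ℝ) (fun _ => 1 / p), F (x + ζ) :=
    setIntegral_mono_on (integrableOn_const isCompact_Icc.measure_lt_top.ne)
      (integrableOn_shift hFc p x) measurableSet_Icc
      fun ζ hζ => hF (le_add_of_nonneg_right hζ.1)
  rw [setIntegral_const, smul_eq_mul] at h
  calc F x = p ^ N * (volume.real (Set.Icc (0 : Fin N → ℝ) (fun _ => 1 / p)) * F x) := by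
        rw [← mul_assoc, volume_real_cube N hp, one_mul]
    _ ≤ _ := mul_le_mul_of_nonneg_left h (by positivity)

lemma Gp_le {N : ℕ} {F : (Fin N → ℝ) → ℝ} (hFc : Continuous F) (hF : Monotone F) {p : ℝ}
    (hp : 0 < p) (x : Fin N → ℝ) : Gp N F p x ≤ F (x + fun _ => 1 / p) := by
  have h : ∫ ζ in Set.Icc (0 : Fin N → ℝ) (fun _ => 1 / p), F (x + ζ) ≤
      ∫ _ζ in Set.Icc (0 : Fin N → ℝ) (fun _ => 1 / p), F (x + fun _ => 1 / p) :=
    setIntegral_mono_on (integrableOn_shift hFc p x)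
      (integrableOn_const isCompact_Icc.measure_lt_top.ne) measurableSet_Icc
      fun ζ hζ => hF (add_le_add_right hζ.2 x)
  rw [setIntegral_const, smul_eq_mul] at h
  calc Gp N F p x ≤ p ^ N * (volume.real (Set.Icc (0 : Fin N → ℝ) (fun _ => 1 / p)) *
          F (x + fun _ => 1 / p)) := mul_le_mul_of_nonneg_left h (by positivity)
    _ = _ := by rw [← mul_assoc, volume_real_cube N hp, one_mul]

lemma le_tauP {N : ℕ} {κ : Fin N → ℝ} (hpos : ∀ i, 0 < κ i) {p : ℝ} (hp : 0 < p) (k : Fin N) :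
    κ k ≤ tauP N p κ k := by
  have h : κ k ^ p ≤ ∑ l ∈ Finset.Iic k, κ l ^ p :=
    Finset.single_le_sum (f := fun l => κ l ^ p)
      (fun i _ => Real.rpow_nonneg (hpos i).le p) (Finset.mem_Iic.2 le_rfl)
  calc κ k = (κ k ^ p) ^ (1 / p) := by
        rw [one_div, Real.rpow_rpow_inv (hpos k).le hp.ne']
    _ ≤ _ := Real.rpow_le_rpow (Real.rpow_nonneg (hpos k).le p) h (by positivity)

lemma tauP_le {N : ℕ} {κ : Fin N → ℝ} (hpos : ∀ i, 0 < κ i)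
    (hmono : ∀ i j : Fin N, i ≤ j → κ i ≤ κ j) {p : ℝ} (hp : 0 < p) (k : Fin N) :
    tauP N p κ k ≤ (N : ℝ) ^ (1 / p) * κ k := by
  have h : ∑ l ∈ Finset.Iic k, κ l ^ p ≤ N * κ k ^ p := by
    calc ∑ l ∈ Finset.Iic k, κ l ^ p ≤ ∑ _l ∈ Finset.Iic k, κ k ^ p :=
          Finset.sum_le_sum fun i hi => Real.rpow_le_rpow (hpos i).le
            (hmono i k (Finset.mem_Iic.1 hi)) hp.le
      _ = (Finset.Iic k).card * κ k ^ p := by rw [Finset.sum_const, nsmul_eq_mul]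
      _ ≤ N * κ k ^ p := by
          refine mul_le_mul_of_nonneg_right ?_ (Real.rpow_nonneg (hpos k).le p)
          exact_mod_cast (Finset.card_le_univ _).trans_eq (Fintype.card_fin N)
  calc tauP N p κ k ≤ (N * κ k ^ p) ^ (1 / p) :=
        Real.rpow_le_rpow (Finset.sum_nonneg fun i _ => Real.rpow_nonneg (hpos i).le p) h
          (by positivity)
    _ = _ := by
        rw [Real.mul_rpow (Nat.cast_nonneg N) (Real.rpow_nonneg (hpos k).le p)]
        congr 1
        rw [one_div, Real.rpow_rpow_inv (hpos k).le hp.ne']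

lemma tendsto_one_div_atTop : Tendsto (fun p : ℝ => 1 / p) atTop (nhds 0) := by
  simpa only [one_div] using tendsto_inv_atTop_zero (𝕜 := ℝ)

lemma tendsto_tauP {N : ℕ} (hN : 1 ≤ N) {κ : Fin N → ℝ} (hpos : ∀ i, 0 < κ i)
    (hmono : ∀ i j : Fin N, i ≤ j → κ i ≤ κ j) :
    Tendsto (fun p : ℝ => tauP N p κ) atTop (nhds κ) := by
  refine tendsto_pi_nhds.2 fun k => ?_
  have hN0 : (N : ℝ) ≠ 0 := by positivity
  have h : Tendsto (fun p : ℝ => (N : ℝ) ^ (1 / p) * κ k) atTop (nhds (κ k)) := by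
    simpa using ((Real.continuousAt_const_rpow (b := 0) hN0).tendsto.comp
      tendsto_one_div_atTop).mul_const (κ k)
  refine tendsto_of_tendsto_of_tendsto_of_le_of_le' tendsto_const_nhds h ?_ ?_
  · filter_upwards [eventually_gt_atTop 0] with p hp using le_tauP hpos hp k
  · filter_upwards [eventually_gt_atTop 0] with p hp using tauP_le hpos hmono hp k

/-- For `F` continuous and nondecreasing in each variable and `κ ∈ (0,∞)^N` with
nondecreasing entries, `F_p(κ) ≥ F(κ)` for every `p ≥ 1` and `F_p(κ) → F(κ)` as `p → ∞`. -/
theorem stmt_4 (N : ℕ) (hN : 1 ≤ N) (F : (Fin N → ℝ) → ℝ)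
    (hFc : Continuous F)
    (hFmono : ∀ κ q : Fin N → ℝ, (∀ i, 0 ≤ q i) → F κ ≤ F (κ + q))
    (κ : Fin N → ℝ) (hpos : ∀ i, 0 < κ i)
    (hmono : ∀ i j : Fin N, i ≤ j → κ i ≤ κ j) :
    (∀ p : ℝ, 1 ≤ p → F κ ≤ FpReg N F p κ) ∧
    Tendsto (fun p : ℝ => FpReg N F p κ) atTop (nhds (F κ)) := by
  have hF : Monotone F := fun x y hxy => by
    simpa using hFmono x (y - x) fun i => sub_nonneg.2 (hxy i)
  have hlow : ∀ p : ℝ, 1 ≤ p → F κ ≤ FpReg N F p κ := fun p hp => by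
    have hp0 : 0 < p := by linarith
    have h1 : F κ ≤ Gp N F p (tauP N p κ) :=
      (hF fun k => le_tauP hpos hp0 k).trans (le_Gp hFc hF hp0 _)
    have h2 : 0 ≤ ∑ k : Fin N, ((N : ℝ) - (k : ℕ)) * κ k :=
      Finset.sum_nonneg fun k _ => mul_nonneg
        (sub_nonneg.2 (by exact_mod_cast k.isLt.le)) (hpos k).le
    exact le_add_of_le_of_nonneg h1 (mul_nonneg (by positivity) h2)
  refine ⟨hlow, ?_⟩
  have hupper : Tendsto (fun p : ℝ => F (tauP N p κ + fun _ => 1 / p) +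
      (1 / p) * ∑ k : Fin N, ((N : ℝ) - (k : ℕ)) * κ k) atTop (nhds (F κ)) := by
    have hshift : Tendsto (fun p : ℝ => (fun _ => 1 / p : Fin N → ℝ)) atTop (nhds 0) :=
      tendsto_pi_nhds.2 fun _ => tendsto_one_div_atTop
    have harg := (tendsto_tauP hN hpos hmono).add hshift
    rw [add_zero] at harg
    simpa only [zero_mul, add_zero, Function.comp_def] using ((hFc.tendsto κ).comp harg).add
      (tendsto_one_div_atTop.mul_const (∑ k : Fin N, ((N : ℝ) - (k : ℕ)) * κ k))
  refine tendsto_of_tendsto_of_tendsto_of_le_of_le' tendsto_const_nhds hupper ?_ ?_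
  · filter_upwards [eventually_ge_atTop 1] with p hp using hlow p hp
  · filter_upwards [eventually_gt_atTop 0] with p hp
    exact add_le_add_left (Gp_le hFc hF hp _) _
end

section
/- Let N ≥ 1, let F : ℝ^N → ℝ be continuous and nondecreasing in each variable, and let p > 1. Then for every κ ∈ (0,∞)^N and every k ∈ {1,…,N}, ∂_{κ_k} F_p(κ) ≥ (N+1−k)/p > 0; in particular, all partial derivatives of F_p on (0,∞)^N are strictly positive. -/
/-!
The cube average of a continuous function is `C¹`: by Fubini, `∫_{[0,h]^N} F(x + ζ) dζ` equals
`∫ s in x_i..x_i+h, Φ(s, x)`, where `Φ` (the slice integral over the other coordinates) is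
continuous and does not depend on `x_i`. The fundamental theorem of calculus gives the continuous
partial derivative `Φ(x_i + h, x) - Φ(x_i, x)` (`hasDerivAt_cubeInt`), and continuous partial
derivatives imply Fréchet differentiability (`differentiableAt_of_partials`). Since `τ_{·,p}` is
differentiable on the positive orthant, `G_p ∘ τ_{·,p}` is differentiable there, so that its
`fderiv` is a genuine derivative. As `F` and `τ_{·,p}` are nondecreasing, the partial derivatives
of `G_p ∘ τ_{·,p}` are nonnegative, and the linear term of `F_p` contributes exactly the claimed
lower bound.
-/

open MeasureTheory

open MeasureTheory

/-- A function on `ℝ^N` with continuous partial derivatives is Fréchet differentiable. The path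
from `x` to `y` that changes one coordinate at a time stays in the sup-norm ball, and the mean value
inequality is applied on each of its segments. -/
lemma differentiableAt_of_partials {N : ℕ} (f : (Fin N → ℝ) → ℝ) (g : Fin N → (Fin N → ℝ) → ℝ)
    (hg : ∀ i, Continuous (g i))
    (hf : ∀ x i, HasDerivAt (fun t => f (Function.update x i t)) (g i x) (x i))
    (x : Fin N → ℝ) : DifferentiableAt ℝ f x := by
  let L : (Fin N → ℝ) →L[ℝ] ℝ := ∑ i, g i x • ContinuousLinearMap.proj (R := ℝ) i
  have hL : ∀ v, L v = ∑ i, g i x * v i := by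
    intro v
    simp [L]
  suffices h : HasFDerivAt f L x from h.differentiableAt
  rw [hasFDerivAt_iff_isLittleO, Asymptotics.isLittleO_iff]
  intro c hc
  have hε : 0 < c / (N + 1) := by positivity
  set ε := c / (N + 1) with hεdef
  have hev : ∀ᶠ y in nhds x, ∀ i, |g i y - g i x| < ε := by
    rw [Filter.eventually_all]
    intro i
    have := (hg i).continuousAt (x := x)
    exact (Metric.continuousAt_iff'.1 this) ε hε
  obtain ⟨δ, hδ, hball⟩ := Metric.eventually_nhds_iff_ball.1 hev
  filter_upwards [Metric.ball_mem_nhds x hδ] with y hy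
  have hyi : ∀ i, |y i - x i| < δ := by
    intro i
    exact lt_of_le_of_lt (dist_le_pi_dist y x i) hy
  have key : ∀ S : Finset (Fin N),
      |f (S.piecewise y x) - f x - ∑ i ∈ S, g i x * (y i - x i)| ≤ ∑ i ∈ S, ε * |y i - x i| := by
    intro S
    induction S using Finset.induction_on with
    | empty => simp
    | insert a S ha ih =>
      rw [Finset.sum_insert ha, Finset.sum_insert ha, Finset.piecewise_insert]
      set z := S.piecewise y x with hz
      have hza : z a = x a := by simp [hz, ha]
      have hd : ∀ t, HasDerivAt (fun t => f (Function.update z a t) - g a x * t)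
          (g a (Function.update z a t) - g a x) t := by
        intro t
        have h1 := hf (Function.update z a t) a
        simp only [Function.update_idem, Function.update_self] at h1
        have h2 := h1.sub ((hasDerivAt_id t).const_mul (g a x))
        rw [mul_one] at h2
        exact h2
      have hmv := (convex_uIcc (x a) (y a)).norm_image_sub_le_of_norm_hasDerivWithin_le
        (f := fun t => f (Function.update z a t) - g a x * t)
        (f' := fun t => g a (Function.update z a t) - g a x) (C := ε)
        (fun t _ => (hd t).hasDerivWithinAt) (by
          intro t ht
          rw [Real.norm_eq_abs]
          refine (hball _ ?_ a).le
          rw [Metric.mem_ball, dist_pi_lt_iff hδ]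
          intro j
          by_cases hj : j = a
          · subst hj
            rw [Function.update_self, Real.dist_eq]
            exact (Set.abs_sub_left_of_mem_uIcc ht).trans_lt (hyi j)
          · rw [Function.update_of_ne hj, hz, Real.dist_eq]
            by_cases hjS : j ∈ S
            · simpa [hjS] using hyi j
            · simpa [hjS] using hδ) Set.left_mem_uIcc Set.right_mem_uIcc
      have hzz : Function.update z a (x a) = z := by rw [← hza, Function.update_eq_self]
      simp only [hzz, Real.norm_eq_abs] at hmv
      have hsplit : f (Function.update z a (y a)) - f x
            - (g a x * (y a - x a) + ∑ i ∈ S, g i x * (y i - x i))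
          = (f (Function.update z a (y a)) - g a x * y a - (f z - g a x * x a))
            + (f z - f x - ∑ i ∈ S, g i x * (y i - x i)) := by ring
      rw [hsplit]
      exact (abs_add_le _ _).trans (add_le_add hmv ih)
  have h := key Finset.univ
  rw [Finset.piecewise_univ] at h
  rw [hL, Real.norm_eq_abs]
  simp only [Pi.sub_apply]
  refine h.trans ?_
  calc ∑ i : Fin N, ε * |y i - x i| ≤ ∑ i : Fin N, ε * ‖y - x‖ := by
        refine Finset.sum_le_sum fun i _ => mul_le_mul_of_nonneg_left ?_ hε.le
        exact norm_le_pi_norm (y - x) i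
    _ = (N * ε) * ‖y - x‖ := by simp [mul_assoc]
    _ ≤ c * ‖y - x‖ := by
        refine mul_le_mul_of_nonneg_right ?_ (norm_nonneg _)
        have : (N + 1) * ε = c := by rw [hεdef]; field_simp
        linarith

/-- The slice integral of `F` over the coordinates other than `i`, with the `i`-th coordinate of
the argument equal to `s`. -/
noncomputable def sliceInt {n : ℕ} (F : (Fin (n + 1) → ℝ) → ℝ) (h : ℝ) (i : Fin (n + 1)) (s : ℝ)
    (x : Fin (n + 1) → ℝ) : ℝ :=
  ∫ ζ in Set.Icc (0 : Fin n → ℝ) (fun _ => h), F (i.insertNth s (i.removeNth x + ζ))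

lemma continuous_sliceInt {n : ℕ} {F : (Fin (n + 1) → ℝ) → ℝ} (hF : Continuous F) (h : ℝ)
    (i : Fin (n + 1)) : Continuous (fun q : ℝ × (Fin (n + 1) → ℝ) => sliceInt F h i q.1 q.2) := by
  unfold sliceInt
  refine continuous_parametric_integral_of_continuous ?_ isCompact_Icc
  refine hF.comp (Continuous.finInsertNth i (by fun_prop) ?_)
  unfold Fin.removeNth
  fun_prop

/-- Fubini in the `i`-th coordinate, followed by the translation `s ↦ s + x i`. -/
lemma cubeInt_eq {n : ℕ} {F : (Fin (n + 1) → ℝ) → ℝ} (hF : Continuous F) {h : ℝ} (hh : 0 ≤ h)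
    (i : Fin (n + 1)) (x : Fin (n + 1) → ℝ) :
    ∫ ζ in Set.Icc (0 : Fin (n + 1) → ℝ) (fun _ => h), F (x + ζ) =
      ∫ s in (x i)..(x i + h), sliceInt F h i s x := by
  have hmp := (volume_preserving_piFinSuccAbove (fun _ : Fin (n + 1) => ℝ) i).symm
  rw [← hmp.setIntegral_preimage_emb (MeasurableEquiv.measurableEmbedding _)]
  have hE : ∀ (s : ℝ) (ζ : Fin n → ℝ),
      (MeasurableEquiv.piFinSuccAbove (fun _ : Fin (n + 1) => ℝ) i).symm (s, ζ) =
        i.insertNth s ζ := fun _ _ => rfl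
  have hpre : (MeasurableEquiv.piFinSuccAbove (fun _ : Fin (n + 1) => ℝ) i).symm ⁻¹'
      (Set.Icc (0 : Fin (n + 1) → ℝ) (fun _ => h)) =
      Set.Icc (0 : ℝ) h ×ˢ Set.Icc (0 : Fin n → ℝ) (fun _ => h) := by
    ext ⟨s, ζ⟩
    rw [Set.mem_preimage, hE, Set.mem_prod, Set.mem_Icc, Set.mem_Icc, Set.mem_Icc,
      Fin.insertNth_le_iff, Fin.le_insertNth_iff]
    exact and_and_and_comm
  have hadd : ∀ (s : ℝ) (ζ : Fin n → ℝ),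
      x + i.insertNth (α := fun _ => ℝ) s ζ = i.insertNth (x i + s) (i.removeNth x + ζ) := by
    intro s ζ
    refine (Fin.insertNth_eq_iff.2 ⟨?_, ?_⟩).symm
    · simp
    · ext j
      simp [Fin.removeNth]
  rw [hpre, Measure.volume_eq_prod, setIntegral_prod]
  · simp only [hE, hadd]
    rw [integral_Icc_eq_integral_Ioc, ← intervalIntegral.integral_of_le hh]
    have := intervalIntegral.integral_comp_add_left (a := 0) (b := h)
      (fun s => sliceInt F h i s x) (x i)
    simpa only [sliceInt, add_zero] using this
  · refine ContinuousOn.integrableOn_compact (isCompact_Icc.prod isCompact_Icc) ?_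
    refine Continuous.continuousOn ?_
    refine hF.comp (continuous_const.add ?_)
    exact Continuous.finInsertNth (A := fun _ => ℝ) i continuous_fst continuous_snd

lemma hasDerivAt_cubeInt {n : ℕ} {F : (Fin (n + 1) → ℝ) → ℝ} (hF : Continuous F) {h : ℝ}
    (hh : 0 ≤ h) (x : Fin (n + 1) → ℝ) (i : Fin (n + 1)) :
    HasDerivAt (fun t => ∫ ζ in Set.Icc (0 : Fin (n + 1) → ℝ) (fun _ => h),
        F (Function.update x i t + ζ))
      (sliceInt F h i (x i + h) x - sliceInt F h i (x i) x) (x i) := by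
  have hs : Continuous (fun s => sliceInt F h i s x) :=
    (continuous_sliceInt hF h i).comp (continuous_id.prodMk continuous_const)
  have hupd : ∀ s t, sliceInt F h i s (Function.update x i t) = sliceInt F h i s x := by
    intro s t
    simp [sliceInt, Fin.removeNth_update]
  have hfun : (fun t => ∫ ζ in Set.Icc (0 : Fin (n + 1) → ℝ) (fun _ => h),
        F (Function.update x i t + ζ)) =
      fun t => (∫ s in (0 : ℝ)..(t + h), sliceInt F h i s x)
        - ∫ s in (0 : ℝ)..t, sliceInt F h i s x := by
    funext t
    rw [cubeInt_eq hF hh i]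
    simp only [hupd, Function.update_self]
    rw [intervalIntegral.integral_interval_sub_left] <;> exact hs.intervalIntegrable _ _
  rw [hfun]
  have h1 : HasDerivAt (fun u => ∫ s in (0 : ℝ)..u, sliceInt F h i s x)
      (sliceInt F h i (x i + h) x) (x i + h) :=
    hs.integral_hasStrictDerivAt 0 _ |>.hasDerivAt
  exact (h1.comp_add_const (x i) h).sub (hs.integral_hasStrictDerivAt 0 _).hasDerivAt

lemma differentiable_Gp (N : ℕ) (F : (Fin N → ℝ) → ℝ) (hF : Continuous F) (p : ℝ) (hp : 0 < p) :
    Differentiable ℝ (Gp N F p) := by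
  intro x
  unfold Gp
  refine DifferentiableAt.const_mul ?_ _
  cases N with
  | zero =>
    exact differentiableAt_of_partials _ (fun i => i.elim0) (fun i => i.elim0)
      (fun _ i => i.elim0) x
  | succ n =>
    have hc := fun i => continuous_sliceInt hF (1 / p) i
    refine differentiableAt_of_partials _
      (fun i x => sliceInt F (1 / p) i (x i + 1 / p) x - sliceInt F (1 / p) i (x i) x) ?_ ?_ x
    · intro i
      exact ((hc i).comp (by fun_prop : Continuous fun x : Fin (n + 1) → ℝ => (x i + 1 / p, x))).sub
        ((hc i).comp (by fun_prop : Continuous fun x : Fin (n + 1) → ℝ => (x i, x)))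
    · intro x i
      exact hasDerivAt_cubeInt hF (by positivity) x i

lemma Gp_mono (N : ℕ) (F : (Fin N → ℝ) → ℝ) (hF : Continuous F)
    (hFmono : ∀ κ q : Fin N → ℝ, (∀ i, 0 ≤ q i) → F κ ≤ F (κ + q)) (p : ℝ) (hp : 0 < p) :
    Monotone (Gp N F p) := by
  intro x y hxy
  unfold Gp
  refine mul_le_mul_of_nonneg_left ?_ (by positivity)
  refine setIntegral_mono ?_ ?_ ?_
  · exact (by fun_prop : Continuous fun ζ => F (x + ζ)).continuousOn.integrableOn_compact
      isCompact_Icc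
  · exact (by fun_prop : Continuous fun ζ => F (y + ζ)).continuousOn.integrableOn_compact
      isCompact_Icc
  · intro ζ
    have h := hFmono (x + ζ) (y - x) (fun i => sub_nonneg.2 (hxy i))
    have he : x + ζ + (y - x) = y + ζ := by abel
    rwa [he] at h

lemma differentiableAt_tauP (N : ℕ) (p : ℝ) (κ : Fin N → ℝ) (hκ : ∀ i, 0 < κ i) :
    DifferentiableAt ℝ (tauP N p) κ := by
  rw [differentiableAt_pi]
  intro k
  unfold tauP
  refine DifferentiableAt.rpow_const ?_ (Or.inl ?_)
  · refine DifferentiableAt.fun_sum fun l _ => ?_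
    exact DifferentiableAt.rpow_const (by fun_prop) (Or.inl (hκ l).ne')
  · exact (Finset.sum_pos (fun l _ => Real.rpow_pos_of_pos (hκ l) p)
      ⟨k, Finset.mem_Iic.2 le_rfl⟩).ne'

lemma tauP_mono (N : ℕ) (p : ℝ) (hp : 0 < p) (κ κ' : Fin N → ℝ) (hκ : ∀ i, 0 < κ i)
    (h : κ ≤ κ') : tauP N p κ ≤ tauP N p κ' := by
  intro k
  unfold tauP
  refine Real.rpow_le_rpow (Finset.sum_nonneg fun l _ => Real.rpow_nonneg (hκ l).le p) ?_
    (by positivity)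
  exact Finset.sum_le_sum fun l _ => Real.rpow_le_rpow (hκ l).le (h l) hp.le

/-- For `F` continuous and nondecreasing in each variable and `p > 1`, every partial
derivative of `F_p` on `(0,∞)^N` satisfies `∂_{κ_k} F_p(κ) ≥ (N+1−k)/p > 0` (0-based: `(N−k)/p`);
in particular all partial derivatives of `F_p` are strictly positive there. -/
theorem stmt_6 (N : ℕ) (hN : 1 ≤ N) (F : (Fin N → ℝ) → ℝ)
    (hFc : Continuous F)
    (hFmono : ∀ κ q : Fin N → ℝ, (∀ i, 0 ≤ q i) → F κ ≤ F (κ + q))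
    (p : ℝ) (hp : 1 < p) :
    ∀ κ : Fin N → ℝ, (∀ i, 0 < κ i) → ∀ k : Fin N,
      ((N : ℝ) - (k : ℕ)) / p ≤ fderiv ℝ (FpReg N F p) κ (Pi.single k 1) ∧
      0 < ((N : ℝ) - (k : ℕ)) / p := by
  intro κ hκ k
  have hp0 : 0 < p := by linarith
  have hk : ((k : ℕ) : ℝ) < N := by exact_mod_cast k.2
  refine ⟨?_, div_pos (by linarith) hp0⟩
  have hd1 : DifferentiableAt ℝ (fun κ => Gp N F p (tauP N p κ)) κ :=
    DifferentiableAt.comp (g := Gp N F p) κ (differentiable_Gp N F hFc p hp0 _)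
      (differentiableAt_tauP N p κ hκ)
  have hd2 : DifferentiableAt ℝ
      (fun κ : Fin N → ℝ => (1 / p) * ∑ k : Fin N, ((N : ℝ) - (k : ℕ)) * κ k) κ := by fun_prop
  have hd : DifferentiableAt ℝ (FpReg N F p) κ := hd1.add hd2
  have hline : HasDerivAt (fun t : ℝ => FpReg N F p (κ + t • Pi.single k 1))
      (fderiv ℝ (FpReg N F p) κ (Pi.single k 1)) 0 := hd.hasFDerivAt.hasLineDerivAt _
  refine ge_of_tendsto hline.tendsto_slope_zero_right ?_
  filter_upwards [self_mem_nhdsWithin] with t ht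
  have ht : 0 < t := ht
  have hle : κ ≤ κ + t • Pi.single k 1 := by
    refine le_add_of_nonneg_right (smul_nonneg ht.le ?_)
    exact Pi.single_nonneg.2 zero_le_one
  have hG := Gp_mono N F hFc hFmono p hp0 (tauP_mono N p hp0 _ _ hκ hle)
  have hsum : ∑ j : Fin N, ((N : ℝ) - (j : ℕ)) * (κ + t • (Pi.single k 1 : Fin N → ℝ)) j =
      (∑ j : Fin N, ((N : ℝ) - (j : ℕ)) * κ j) + ((N : ℝ) - (k : ℕ)) * t := by
    simp [mul_add, Finset.sum_add_distrib, Pi.single_apply]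
  simp only [zero_add, zero_smul, add_zero, smul_eq_mul, FpReg, hsum]
  rw [le_inv_mul_iff₀ ht]
  have he : t * (((N : ℝ) - (k : ℕ)) / p) = 1 / p * (((N : ℝ) - (k : ℕ)) * t) := by ring
  rw [he, mul_add]
  linarith
end

section
/- Let n ≥ 2, let Ω ⊆ ℝ^n be a Lebesgue-measurable set, let u_1, …, u_m : ℝ^n → ℝ be Lipschitz functions with common Lipschitz constant L, let ξ_1, …, ξ_m ≥ 0 with Σ_k ξ_k ≤ Ξ, and let Z ⊆ ℝ^n be a set on which every u_k vanishes. Then there is a constant C depending only on n, L, Ξ such that |W(x,r) − W(y,r)| ≤ C |x−y| / r for all x, y ∈ Z and all r > 0. -/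
/-!
Write `d = |x - y|`. The volume integrand is bounded by `Ξ L² + 1`, so the two volume terms differ
by at most this bound times the measure of the symmetric difference of `B_r(x)` and `B_r(y)`; that
difference lies in shells of width `d`, whence a measure of order `r^(n-1) d`
(`volume_ball_diff_ball_le`, `bulk_le`).

For the boundary terms both spheres are translated to the origin. Pointwise on `|z| = r`,
`|u(x+z)² - u(y+z)²| ≤ L d · 2 L r`, since `u` is `L`-Lipschitz and vanishes at `x` and `y`.
Integrating over the sphere of radius `r`, whose `(n-1)`-dimensional Hausdorff measure is `r^(n-1)`
times that of the unit sphere, bounds the difference by a multiple of `r^n d` (`boundary_le`).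
This needs the unit sphere to have finite Hausdorff measure
(`hausdorffMeasure_unitSphere_lt_top`), which holds because it is the union of the radial
projections of the `2n` faces of the cube `[-1,1]^n`, each a Lipschitz image of an
`(n-1)`-dimensional cube.
-/

open MeasureTheory Metric

/-- The Weiss energy
`W(x,r) = r^{-n} ∫_{B_r(x)∩Ω} (Σ_k ξ_k |∇u_k|² + 1) − r^{-(n+1)} ∫_{∂B_r(x)} Σ_k ξ_k u_k² dH^{n-1}`. -/
noncomputable def weissW {n m : ℕ} (Ω : Set (EuclideanSpace ℝ (Fin n)))
    (u : Fin m → EuclideanSpace ℝ (Fin n) → ℝ) (ξ : Fin m → ℝ)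
    (x : EuclideanSpace ℝ (Fin n)) (r : ℝ) : ℝ :=
  (∫ y in ball x r ∩ Ω, ((∑ k, ξ k * ‖fderiv ℝ (u k) y‖ ^ 2) + 1)) / r ^ n -
    (∫ y in sphere x r, ∑ k, ξ k * u k y ^ 2 ∂μH[(n : ℝ) - 1]) / r ^ (n + 1)

lemma lipschitzOnWith_normalize {E : Type*} [NormedAddCommGroup E] [NormedSpace ℝ E] :
    LipschitzOnWith 2 (fun a : E => ‖a‖⁻¹ • a) {a | 1 ≤ ‖a‖} := by
  refine LipschitzOnWith.of_dist_le_mul fun a ha b hb => ?_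
  have ha : 1 ≤ ‖a‖ := ha
  have hb : 1 ≤ ‖b‖ := hb
  have ha0 : 0 < ‖a‖ := by linarith
  have hb0 : 0 < ‖b‖ := by linarith
  rw [dist_eq_norm, dist_eq_norm]
  have hsplit : ‖a‖⁻¹ • a - ‖b‖⁻¹ • b
      = ‖a‖⁻¹ • ((a - b) + ((‖b‖ - ‖a‖) * ‖b‖⁻¹) • b) := by
    have h : ‖a‖⁻¹ * ((‖b‖ - ‖a‖) * ‖b‖⁻¹) = ‖a‖⁻¹ - ‖b‖⁻¹ := by field_simp
    rw [smul_add, smul_smul, h, smul_sub, sub_smul]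
    abel
  have hle : ‖(a - b) + ((‖b‖ - ‖a‖) * ‖b‖⁻¹) • b‖ ≤ 2 * ‖a - b‖ := by
    refine (norm_add_le _ _).trans ?_
    have h : ‖((‖b‖ - ‖a‖) * ‖b‖⁻¹) • b‖ = |‖b‖ - ‖a‖| := by
      rw [norm_smul, norm_mul, norm_inv, norm_norm, mul_assoc, inv_mul_cancel₀ hb0.ne', mul_one,
        Real.norm_eq_abs]
    rw [h, abs_sub_comm]
    linarith [abs_norm_sub_norm_le a b]
  rw [hsplit, norm_smul, norm_inv, norm_norm]
  calc ‖a‖⁻¹ * _ ≤ 1 * (2 * ‖a - b‖) :=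
        mul_le_mul (inv_le_one_of_one_le₀ ha) hle (norm_nonneg _) zero_le_one
    _ = _ := by simp

/-- The chart of the unit sphere attached to a face of the cube `[-1,1]^(k+1)`: the point `w` of
the face whose `i`-th coordinate equals `s` is projected radially. -/
noncomputable def faceChart (k : ℕ) (i : Fin (k + 1)) (s : ℝ) (w : Fin k → ℝ) :
    EuclideanSpace ℝ (Fin (k + 1)) :=
  ‖WithLp.toLp 2 (i.insertNth s w : Fin (k + 1) → ℝ)‖⁻¹ •
    WithLp.toLp 2 (i.insertNth s w : Fin (k + 1) → ℝ)

lemma lipschitz_faceChart (k : ℕ) (i : Fin (k + 1)) (s : ℝ) (hs : |s| = 1) :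
    ∃ K : NNReal, LipschitzWith K (faceChart k i s) := by
  have h1 : LipschitzWith 1 (fun w : Fin k → ℝ => (i.insertNth s w : Fin (k + 1) → ℝ)) := by
    refine LipschitzWith.of_dist_le_mul fun w v => ?_
    rw [NNReal.coe_one, one_mul, dist_pi_le_iff dist_nonneg]
    intro j
    induction j using i.succAboveCases with
    | x => simp
    | p j => simpa using dist_le_pi_dist w v j
  have h2 := (PiLp.lipschitzWith_toLp 2 (fun _ : Fin (k + 1) => ℝ)).comp h1
  have h3 := (lipschitzOnWith_normalize (E := EuclideanSpace ℝ (Fin (k + 1)))).comp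
    (h2.lipschitzOnWith (s := Set.univ)) (fun w _ => ?_)
  · exact ⟨_, lipschitzOnWith_univ.1 h3⟩
  · have h := PiLp.norm_apply_le (WithLp.toLp 2 (i.insertNth s w : Fin (k + 1) → ℝ)) i
    simpa [hs] using h

/-- The unit sphere is covered by the `2(k+1)` face charts of the cube: divide a unit vector by
the absolute value of its largest coordinate. -/
lemma sphere_subset_faceChart (k : ℕ) :
    sphere (0 : EuclideanSpace ℝ (Fin (k + 1))) 1 ⊆
      ⋃ i : Fin (k + 1),
        (faceChart k i 1 '' Set.Icc (-1) 1) ∪ (faceChart k i (-1) '' Set.Icc (-1) 1) := by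
  intro z hz
  have hz1 : ‖z‖ = 1 := by simpa using hz
  obtain ⟨i, -, hi⟩ := Finset.exists_max_image Finset.univ (fun j => |z j|) Finset.univ_nonempty
  have hi : ∀ j, |z j| ≤ |z i| := fun j => hi j (Finset.mem_univ j)
  have hpos : 0 < |z i| := by
    rw [abs_pos]
    intro h0
    have : z = 0 := by
      ext j
      have := hi j
      rw [h0, abs_zero] at this
      simpa using abs_nonpos_iff.1 this
    simp [this] at hz1
  set t := |z i| with ht
  have key : ∀ s : ℝ, s = t⁻¹ * z i →
      z ∈ faceChart k i s '' Set.Icc (-1) 1 := by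
    intro s hs
    refine ⟨fun j => t⁻¹ * z (i.succAbove j), ?_, ?_⟩
    · have hb : ∀ j, |t⁻¹ * z (i.succAbove j)| ≤ 1 := fun j => by
        rw [abs_mul, abs_of_pos (inv_pos.2 hpos), inv_mul_le_one₀ hpos]
        exact hi _
      exact ⟨fun j => (abs_le.1 (hb j)).1, fun j => (abs_le.1 (hb j)).2⟩
    · have hv : WithLp.toLp 2
          (i.insertNth s (fun j => t⁻¹ * z (i.succAbove j)) : Fin (k + 1) → ℝ) = t⁻¹ • z := by
        ext j
        induction j using i.succAboveCases with
        | x => simp [hs]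
        | p j => simp
      rw [faceChart, hv, norm_smul, hz1, norm_inv, Real.norm_eq_abs, abs_of_pos hpos, smul_smul]
      simp [hpos.ne']
  refine Set.mem_iUnion.2 ⟨i, ?_⟩
  rcases abs_cases (z i) with ⟨h, -⟩ | ⟨h, -⟩
  · left
    exact key 1 (by rw [← h, ← ht, inv_mul_cancel₀ hpos.ne'])
  · right
    refine key (-1) ?_
    have : z i = -t := by rw [ht, h, neg_neg]
    rw [this, mul_neg, inv_mul_cancel₀ hpos.ne']

lemma hausdorffMeasure_unitSphere_lt_top (n : ℕ) (hn : 2 ≤ n) :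
    μH[(n : ℝ) - 1] (sphere (0 : EuclideanSpace ℝ (Fin n)) 1) < ⊤ := by
  obtain ⟨k, rfl⟩ : ∃ k, n = k + 1 := ⟨n - 1, by omega⟩
  have hk : ((k + 1 : ℕ) : ℝ) - 1 = k := by push_cast; ring
  rw [hk]
  have hface : ∀ (i : Fin (k + 1)) (s : ℝ), |s| = 1 →
      μH[(k : ℝ)] (faceChart k i s '' Set.Icc (-1) 1) < ⊤ := by
    intro i s hs
    obtain ⟨K, hK⟩ := lipschitz_faceChart k i s hs
    refine (hK.hausdorffMeasure_image_le (Nat.cast_nonneg k) _).trans_lt ?_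
    have hvol : (μH[(k : ℝ)] : Measure (Fin k → ℝ)) = volume := by
      simpa using hausdorffMeasure_pi_real (ι := Fin k)
    rw [hvol]
    exact ENNReal.mul_lt_top (ENNReal.rpow_lt_top_of_nonneg (Nat.cast_nonneg k) ENNReal.coe_ne_top)
      isCompact_Icc.measure_lt_top
  refine (measure_mono (sphere_subset_faceChart k)).trans_lt ?_
  refine (measure_iUnion_fintype_le _ _).trans_lt (ENNReal.sum_lt_top.2 fun i _ => ?_)
  exact measure_union_lt_top (hface i 1 (by simp)) (hface i (-1) (by simp))

open scoped Pointwise in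
lemma hausdorffMeasure_sphere (n : ℕ) (hn : 2 ≤ n) {r : ℝ} (hr : 0 < r) :
    μH[(n : ℝ) - 1] (sphere (0 : EuclideanSpace ℝ (Fin n)) r) =
      ENNReal.ofReal (r ^ (n - 1)) * μH[(n : ℝ) - 1] (sphere (0 : EuclideanSpace ℝ (Fin n)) 1) := by
  have hd : (n : ℝ) - 1 = (n - 1 : ℕ) := by rw [Nat.cast_sub (by omega)]; simp
  have hs : sphere (0 : EuclideanSpace ℝ (Fin n)) r = r • sphere (0 : EuclideanSpace ℝ (Fin n)) (1 : ℝ) := by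
    rw [smul_sphere' hr.ne']
    simp [abs_of_pos hr]
  rw [hs, Measure.hausdorffMeasure_smul₀ (by rw [hd]; positivity) hr.ne', hd, NNReal.rpow_natCast,
    ENNReal.smul_def, smul_eq_mul, ENNReal.ofReal_pow hr.le]
  congr 1
  rw [ENNReal.coe_pow]
  congr 1
  rw [← enorm_eq_nnnorm, Real.enorm_of_nonneg hr.le]

/-- The set lies in the shell `B_r(x) \ B_{r-|x-y|}(x)`, or has measure at most that of `B_r(x)`
when `r < |x-y|`. -/
lemma volume_ball_diff_ball_le (n : ℕ) (hn : 2 ≤ n) (x y : EuclideanSpace ℝ (Fin n)) {r : ℝ}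
    (hr : 0 < r) :
    volume.real (ball x r \ ball y r) ≤
      volume.real (ball (0 : EuclideanSpace ℝ (Fin n)) 1) * (n * r ^ (n - 1) * dist x y) := by
  have : Nonempty (Fin n) := ⟨⟨0, by omega⟩⟩
  have hball : ∀ s : ℝ, 0 ≤ s → volume.real (ball x s) =
      s ^ n * volume.real (ball (0 : EuclideanSpace ℝ (Fin n)) 1) := by
    intro s hs
    rw [measureReal_def, Measure.addHaar_ball volume x hs, ENNReal.toReal_mul,
      ENNReal.toReal_ofReal (pow_nonneg hs _), finrank_euclideanSpace_fin, measureReal_def]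
  have hc : 0 ≤ volume.real (ball (0 : EuclideanSpace ℝ (Fin n)) 1) := measureReal_nonneg
  have hd : 0 ≤ dist x y := dist_nonneg
  rw [mul_comm]
  rcases le_or_gt (dist x y) r with h | h
  · have hsub : ball x r \ ball y r ⊆ ball x r \ ball x (r - dist x y) :=
      Set.sdiff_subset_sdiff_right (ball_subset_ball' (by linarith))
    refine (measureReal_mono hsub
      (measure_ne_top_of_subset Set.sdiff_subset measure_ball_lt_top.ne)).trans ?_
    rw [measureReal_sdiff (ball_subset_ball (by linarith)) measurableSet_ball
      measure_ball_lt_top.ne, hball r hr.le, hball _ (by linarith), ← sub_mul]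
    refine mul_le_mul_of_nonneg_right ?_ hc
    have := abs_pow_sub_pow_le r (r - dist x y) n
    rw [sub_sub_cancel, abs_of_nonneg hd, abs_of_pos hr,
      abs_of_nonneg (a := r - dist x y) (by linarith), max_eq_left (by linarith)] at this
    calc _ ≤ _ := (le_abs_self _).trans this
      _ = _ := by ring
  · refine (measureReal_mono Set.sdiff_subset measure_ball_lt_top.ne).trans ?_
    rw [hball r hr.le]
    refine mul_le_mul_of_nonneg_right ?_ hc
    have h1 : (1 : ℝ) ≤ n := by exact_mod_cast (by omega : 1 ≤ n)
    calc r ^ n = r ^ (n - 1) * r := by rw [← pow_succ]; congr 1; omega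
      _ ≤ r ^ (n - 1) * dist x y := by gcongr
      _ ≤ n * (r ^ (n - 1) * dist x y) := le_mul_of_one_le_left (by positivity) h1
      _ = _ := by ring

lemma abs_setIntegral_sub_le {α : Type*} [MeasurableSpace α] {μ : Measure α} {A B : Set α}
    (hA : MeasurableSet A) (hB : MeasurableSet B) (hAf : μ A < ⊤) (hBf : μ B < ⊤)
    {f : α → ℝ} (hf : Measurable f) {M : ℝ} (hM : ∀ z, |f z| ≤ M) :
    |∫ z in A, f z ∂μ - ∫ z in B, f z ∂μ| ≤ M * (μ.real (A \ B) + μ.real (B \ A)) := by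
  have hint : ∀ S : Set α, μ S < ⊤ → IntegrableOn f S μ := fun S hS =>
    Measure.integrableOn_of_bounded (M := M) hS.ne hf.aestronglyMeasurable
      (Filter.Eventually.of_forall hM)
  have h1 := integral_inter_add_sdiff hB (hint A hAf)
  have h2 := integral_inter_add_sdiff hA (hint B hBf)
  rw [Set.inter_comm] at h2
  have h3 := norm_setIntegral_le_of_norm_le_const (f := f) (C := M)
    ((measure_mono (Set.sdiff_subset (s := A) (t := B))).trans_lt hAf) (fun z _ => hM z)
  have h4 := norm_setIntegral_le_of_norm_le_const (f := f) (C := M)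
    ((measure_mono (Set.sdiff_subset (s := B) (t := A))).trans_lt hBf) (fun z _ => hM z)
  rw [Real.norm_eq_abs] at h3 h4
  rw [← h1, ← h2, add_sub_add_left_eq_sub, mul_add]
  exact (abs_sub _ _).trans (add_le_add h3 h4)

lemma setIntegral_sphere_eq_translate {n : ℕ} (d r : ℝ) (x : EuclideanSpace ℝ (Fin n))
    (g : EuclideanSpace ℝ (Fin n) → ℝ) :
    ∫ z in sphere x r, g z ∂μH[d] = ∫ z in sphere 0 r, g (x + z) ∂μH[d] := by
  have h := ((IsometryEquiv.addLeft x).measurePreserving_hausdorffMeasure d).setIntegral_preimage_emb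
    (IsometryEquiv.addLeft x).toHomeomorph.measurableEmbedding g (sphere x r)
  rw [← h, IsometryEquiv.preimage_sphere]
  simp

lemma bulk_le {n m : ℕ} (hn : 2 ≤ n) {L : NNReal} {Ξ : ℝ} {Ω : Set (EuclideanSpace ℝ (Fin n))}
    (hΩ : MeasurableSet Ω) {u : Fin m → EuclideanSpace ℝ (Fin n) → ℝ}
    (hu : ∀ k, LipschitzWith L (u k)) {ξ : Fin m → ℝ} (hξ : ∀ k, 0 ≤ ξ k) (hΞ : ∑ k, ξ k ≤ Ξ)
    (x y : EuclideanSpace ℝ (Fin n)) {r : ℝ} (hr : 0 < r) :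
    |(∫ z in ball x r ∩ Ω, ((∑ k, ξ k * ‖fderiv ℝ (u k) z‖ ^ 2) + 1)) -
      ∫ z in ball y r ∩ Ω, ((∑ k, ξ k * ‖fderiv ℝ (u k) z‖ ^ 2) + 1)| ≤
      2 * (Ξ * L ^ 2 + 1) * volume.real (ball (0 : EuclideanSpace ℝ (Fin n)) 1) * n *
        (r ^ (n - 1) * dist x y) := by
  have hΞ0 : 0 ≤ Ξ := (Finset.sum_nonneg fun k _ => hξ k).trans hΞ
  have hmeas : Measurable fun z => (∑ k, ξ k * ‖fderiv ℝ (u k) z‖ ^ 2) + 1 := by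
    refine (Finset.measurable_sum _ fun k _ => ?_).add_const 1
    exact ((measurable_fderiv ℝ (u k)).norm.pow_const 2).const_mul _
  have hbound : ∀ z, |(∑ k, ξ k * ‖fderiv ℝ (u k) z‖ ^ 2) + 1| ≤ Ξ * L ^ 2 + 1 := by
    intro z
    rw [abs_of_nonneg (add_nonneg (Finset.sum_nonneg fun k _ => mul_nonneg (hξ k) (sq_nonneg _))
      zero_le_one)]
    gcongr
    calc ∑ k, ξ k * ‖fderiv ℝ (u k) z‖ ^ 2 ≤ ∑ k, ξ k * (L : ℝ) ^ 2 := by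
          gcongr with k
          · exact hξ k
          · exact norm_fderiv_le_of_lipschitz ℝ (hu k)
      _ = (∑ k, ξ k) * (L : ℝ) ^ 2 := by rw [Finset.sum_mul]
      _ ≤ _ := by gcongr
  have hfin : ∀ x : EuclideanSpace ℝ (Fin n), volume (ball x r ∩ Ω) < ⊤ := fun x =>
    (measure_mono Set.inter_subset_left).trans_lt measure_ball_lt_top
  have hdiff : ∀ x y : EuclideanSpace ℝ (Fin n),
      volume.real ((ball x r ∩ Ω) \ (ball y r ∩ Ω)) ≤
        volume.real (ball (0 : EuclideanSpace ℝ (Fin n)) 1) * (n * r ^ (n - 1) * dist x y) := by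
    intro x y
    refine (measureReal_mono ?_ ?_).trans (volume_ball_diff_ball_le n hn x y hr)
    · exact fun z hz => ⟨hz.1.1, fun h => hz.2 ⟨h, hz.1.2⟩⟩
    · exact measure_ne_top_of_subset Set.sdiff_subset measure_ball_lt_top.ne
  refine (abs_setIntegral_sub_le (measurableSet_ball.inter hΩ) (measurableSet_ball.inter hΩ)
    (hfin x) (hfin y) hmeas hbound).trans ?_
  have h1 := hdiff x y
  have h2 := hdiff y x
  rw [dist_comm y x] at h2
  refine (mul_le_mul_of_nonneg_left (add_le_add h1 h2) (by positivity)).trans (le_of_eq ?_)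
  ring

/-- After translating both spheres to the origin, the integrands differ by
`Σ ξ_k (u_k(x+z) - u_k(y+z)) (u_k(x+z) + u_k(y+z))`; the first factor is at most `L |x-y|` and,
because `u_k` vanishes at the centres, the second is at most `2 L r`. -/
lemma boundary_le {n m : ℕ} (hn : 2 ≤ n) {L : NNReal} {Ξ : ℝ}
    {u : Fin m → EuclideanSpace ℝ (Fin n) → ℝ}
    (hu : ∀ k, LipschitzWith L (u k)) {ξ : Fin m → ℝ} (hξ : ∀ k, 0 ≤ ξ k) (hΞ : ∑ k, ξ k ≤ Ξ)
    {x y : EuclideanSpace ℝ (Fin n)} (hx : ∀ k, u k x = 0) (hy : ∀ k, u k y = 0)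
    {r : ℝ} (hr : 0 < r) :
    |(∫ z in sphere x r, ∑ k, ξ k * u k z ^ 2 ∂μH[(n : ℝ) - 1]) -
      ∫ z in sphere y r, ∑ k, ξ k * u k z ^ 2 ∂μH[(n : ℝ) - 1]| ≤
      2 * Ξ * L ^ 2 * (μH[(n : ℝ) - 1]).real (sphere (0 : EuclideanSpace ℝ (Fin n)) 1) *
        (r ^ n * dist x y) := by
  have hfin : μH[(n : ℝ) - 1] (sphere (0 : EuclideanSpace ℝ (Fin n)) r) < ⊤ := by
    rw [hausdorffMeasure_sphere n hn hr]
    exact ENNReal.mul_lt_top ENNReal.ofReal_lt_top (hausdorffMeasure_unitSphere_lt_top n hn)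
  have hreal : (μH[(n : ℝ) - 1]).real (sphere (0 : EuclideanSpace ℝ (Fin n)) r) =
      r ^ (n - 1) * (μH[(n : ℝ) - 1]).real (sphere (0 : EuclideanSpace ℝ (Fin n)) 1) := by
    rw [measureReal_def, hausdorffMeasure_sphere n hn hr, ENNReal.toReal_mul,
      ENNReal.toReal_ofReal (by positivity), measureReal_def]
  have hsmall : ∀ p : EuclideanSpace ℝ (Fin n), (∀ k, u k p = 0) →
      ∀ z ∈ sphere (0 : EuclideanSpace ℝ (Fin n)) r, ∀ k, |u k (p + z)| ≤ L * r := by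
    intro p hp z hz k
    have h := (hu k).dist_le_mul (p + z) p
    rw [hp k, Real.dist_eq, sub_zero, dist_eq_norm, add_sub_cancel_left,
      mem_sphere_zero_iff_norm.1 hz] at h
    exact h
  have hint : ∀ p : EuclideanSpace ℝ (Fin n), (∀ k, u k p = 0) →
      IntegrableOn (fun z => ∑ k, ξ k * u k (p + z) ^ 2) (sphere 0 r) μH[(n : ℝ) - 1] := by
    intro p hp
    have hcont : Continuous fun z => ∑ k, ξ k * u k (p + z) ^ 2 := by
      refine continuous_finsetSum _ fun k _ => ?_
      exact (((hu k).continuous.comp (continuous_const.add continuous_id)).pow 2).const_mul _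
    refine Measure.integrableOn_of_bounded (M := ∑ k, ξ k * (L * r) ^ 2) hfin.ne
      hcont.aestronglyMeasurable ?_
    refine (ae_restrict_iff' isClosed_sphere.measurableSet).2 (Filter.Eventually.of_forall ?_)
    intro z hz
    rw [Real.norm_eq_abs, abs_of_nonneg (Finset.sum_nonneg fun k _ =>
      mul_nonneg (hξ k) (sq_nonneg _))]
    refine Finset.sum_le_sum fun k _ => mul_le_mul_of_nonneg_left ?_ (hξ k)
    rw [← sq_abs]
    exact pow_le_pow_left₀ (abs_nonneg _) (hsmall p hp z hz k) 2
  rw [setIntegral_sphere_eq_translate _ _ x, setIntegral_sphere_eq_translate _ _ y,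
    ← integral_sub (hint x hx) (hint y hy)]
  have hpt : ∀ z ∈ sphere (0 : EuclideanSpace ℝ (Fin n)) r,
      ‖(∑ k, ξ k * u k (x + z) ^ 2) - ∑ k, ξ k * u k (y + z) ^ 2‖ ≤
        Ξ * ((L * dist x y) * (2 * (L * r))) := by
    intro z hz
    rw [← Finset.sum_sub_distrib]
    refine (norm_sum_le _ _).trans ?_
    calc _ ≤ ∑ k, ξ k * ((L * dist x y) * (2 * (L * r))) := by
          refine Finset.sum_le_sum fun k _ => ?_
          have hfac : ξ k * u k (x + z) ^ 2 - ξ k * u k (y + z) ^ 2 =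
              ξ k * ((u k (x + z) - u k (y + z)) * (u k (x + z) + u k (y + z))) := by ring
          rw [hfac, Real.norm_eq_abs, abs_mul, abs_mul, abs_of_nonneg (hξ k)]
          have h1 := (hu k).dist_le_mul (x + z) (y + z)
          rw [Real.dist_eq, dist_add_right] at h1
          have h2 : |u k (x + z) + u k (y + z)| ≤ 2 * (L * r) := by
            have := abs_add_le (u k (x + z)) (u k (y + z))
            linarith [hsmall x hx z hz k, hsmall y hy z hz k]
          have := hξ k
          gcongr
      _ = (∑ k, ξ k) * ((L * dist x y) * (2 * (L * r))) := by rw [Finset.sum_mul]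
      _ ≤ _ := by gcongr
  refine (norm_setIntegral_le_of_norm_le_const hfin hpt).trans (le_of_eq ?_)
  have hpow : r ^ n = r ^ (n - 1) * r := by rw [← pow_succ]; congr 1; omega
  rw [hreal, hpow]
  ring

/-- there is `C = C(n, L, Ξ)` such that for any measurable `Ω`, any finite family of
`L`-Lipschitz functions `u_k` vanishing on a set `Z`, and any nonnegative weights `ξ_k` with
`Σ ξ_k ≤ Ξ`, the Weiss energy satisfies `|W(x,r) − W(y,r)| ≤ C |x−y| / r` for `x, y ∈ Z`, `r > 0`. -/
theorem stmt_9 (n : ℕ) (hn : 2 ≤ n) (L : NNReal) (Ξ : ℝ) :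
    ∃ C : ℝ, 0 < C ∧
      ∀ (Ω : Set (EuclideanSpace ℝ (Fin n))), MeasurableSet Ω →
      ∀ (m : ℕ) (u : Fin m → EuclideanSpace ℝ (Fin n) → ℝ),
        (∀ k, LipschitzWith L (u k)) →
      ∀ (ξ : Fin m → ℝ), (∀ k, 0 ≤ ξ k) → (∑ k, ξ k) ≤ Ξ →
      ∀ (Z : Set (EuclideanSpace ℝ (Fin n))), (∀ x ∈ Z, ∀ k, u k x = 0) →
      ∀ x ∈ Z, ∀ y ∈ Z, ∀ r : ℝ, 0 < r →
        |weissW Ω u ξ x r - weissW Ω u ξ y r| ≤ C * dist x y / r := by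
  set A : ℝ := 2 * (Ξ * L ^ 2 + 1) * volume.real (ball (0 : EuclideanSpace ℝ (Fin n)) 1) * n
    with hA
  set B : ℝ := 2 * Ξ * L ^ 2 * (μH[(n : ℝ) - 1]).real (sphere (0 : EuclideanSpace ℝ (Fin n)) 1)
    with hB
  -- The absolute values only serve positivity of the constant when `Ξ < 0`, where no admissible
  -- weights exist.
  refine ⟨|A| + |B| + 1, by positivity, ?_⟩
  intro Ω hΩ m u hu ξ hξ hΞ Z hZ x hx y hy r hr
  have h1 := bulk_le hn hΩ hu hξ hΞ x y hr
  have h2 := boundary_le hn hu hξ hΞ (hZ x hx) (hZ y hy) hr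
  rw [← hA] at h1
  rw [← hB] at h2
  have hd : 0 ≤ dist x y := dist_nonneg
  unfold weissW
  rw [sub_sub_sub_comm, ← sub_div, ← sub_div]
  refine (abs_sub _ _).trans ?_
  rw [abs_div, abs_div, abs_of_pos (pow_pos hr n), abs_of_pos (pow_pos hr (n + 1))]
  have hpow : r ^ n = r ^ (n - 1) * r := by rw [← pow_succ]; congr 1; omega
  calc _ ≤ A * (r ^ (n - 1) * dist x y) / r ^ n + B * (r ^ n * dist x y) / r ^ (n + 1) := by gcongr
    _ = (A + B) * dist x y / r := by
        rw [pow_succ, hpow]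
        field_simp
    _ ≤ (|A| + |B| + 1) * dist x y / r := by
        have hAB : A + B ≤ |A| + |B| + 1 := by linarith [le_abs_self A, le_abs_self B]
        gcongr
end

section
/- Let v : ℝ^n → ℝ be Lipschitz with constant L and positively 1-homogeneous, i.e. v(tz) = t·v(z) for all t > 0 and z ∈ ℝ^n. Let x ∈ ℝ^n \ {0} with v(x) = 0, and set e = x/|x|. Then for every point z with 0 < |z − x| ≤ |x|/2 at which v is differentiable, the directional derivative satisfies |∂_e v(z)| ≤ 4L |z − x| / |x|. (Consequently any locally uniform blow-up limit of v at x is invariant in the direction e.) -/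
/-!
Euler's relation `Dv(z) z = v(z)` gives `Dv(z) x = v(z) - Dv(z) (z - x)`. Since `v x = 0`, the
Lipschitz bound controls both terms on the right by `L ‖z - x‖`, so `|Dv(z) x| ≤ 2 L ‖z - x‖`.
Dividing by `‖x‖` proves the claim, with constant `2` in place of `4`.
-/

/-- Euler's relation for positively 1-homogeneous functions. -/
lemma fderiv_apply_self_of_posHom {E : Type*} [NormedAddCommGroup E] [NormedSpace ℝ E]
    {v : E → ℝ} (hhom : ∀ t : ℝ, 0 < t → ∀ z, v (t • z) = t * v z) {z : E}
    (hz : DifferentiableAt ℝ v z) : fderiv ℝ v z z = v z := by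
  -- Both sides are the derivative at `t = 1` of `t ↦ v (t • z)`, which is `t * v z` near `1`.
  have hline : HasDerivAt (fun t : ℝ => t • z) z 1 := by
    simpa using (hasDerivAt_id (1 : ℝ)).smul_const z
  have hz' : HasFDerivAt v (fderiv ℝ v z) ((1 : ℝ) • z) := by
    simpa using hz.hasFDerivAt
  have hcomp : HasDerivAt (fun t : ℝ => v (t • z)) (fderiv ℝ v z z) 1 :=
    hz'.comp_hasDerivAt (1 : ℝ) hline
  have hlin : HasDerivAt (fun t : ℝ => t * v z) (v z) 1 := by
    simpa using (hasDerivAt_id (1 : ℝ)).mul_const (v z)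
  refine hcomp.unique (hlin.congr_of_eventuallyEq ?_)
  filter_upwards [lt_mem_nhds (zero_lt_one : (0 : ℝ) < 1)] with t ht
  exact hhom t ht z

/-- if `v` is `L`-Lipschitz and positively 1-homogeneous, `x ≠ 0` with `v(x) = 0`
and `e = x/|x|`, then at every point `z` with `0 < |z−x| ≤ |x|/2` where `v` is differentiable,
`|∂_e v(z)| ≤ 4 L |z−x| / |x|`. -/
theorem stmt_10 (n : ℕ) (hn : 1 ≤ n) (L : NNReal)
    (v : EuclideanSpace ℝ (Fin n) → ℝ) (hlip : LipschitzWith L v)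
    (hhom : ∀ t : ℝ, 0 < t → ∀ z, v (t • z) = t * v z)
    (x : EuclideanSpace ℝ (Fin n)) (hx : x ≠ 0) (hvx : v x = 0) :
    ∀ z : EuclideanSpace ℝ (Fin n), 0 < ‖z - x‖ → ‖z - x‖ ≤ ‖x‖ / 2 →
      DifferentiableAt ℝ v z →
      |fderiv ℝ v z (‖x‖⁻¹ • x)| ≤ 4 * L * ‖z - x‖ / ‖x‖ := by
  intro z _ _ hz
  have hxpos : 0 < ‖x‖ := norm_pos_iff.mpr hx
  have hLz : (0 : ℝ) ≤ L * ‖z - x‖ := by positivity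
  have hvz : |v z| ≤ L * ‖z - x‖ := by
    simpa [hvx] using hlip.norm_sub_le z x
  have hD : |fderiv ℝ v z (z - x)| ≤ L * ‖z - x‖ :=
    (fderiv ℝ v z).le_of_opNorm_le (norm_fderiv_le_of_lipschitz ℝ hlip) (z - x)
  have hDx : fderiv ℝ v z x = v z - fderiv ℝ v z (z - x) := by
    rw [map_sub, fderiv_apply_self_of_posHom hhom hz, sub_sub_cancel]
  have hbound : |fderiv ℝ v z x| ≤ 4 * L * ‖z - x‖ := by
    rw [hDx]
    linarith [abs_sub (v z) (fderiv ℝ v z (z - x))]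
  rw [map_smul, smul_eq_mul, abs_mul, abs_of_pos (inv_pos.mpr hxpos), inv_mul_eq_div]
  gcongr
end
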